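/- arXiv:2302.13030 — 2 statements merged into one kernel-verified Lean document; each statement's English description precedes it below -/
import Mathlib

section
/- For n ≥ 1 and β ∈ (0,n), the Fourier transform of the tempered distribution |x|^{β-n} equals γ(β)(2π)^{-β}|ξ|^{-β} in the distributional sense: for every Schwartz function φ, ∫_{ℝⁿ} |x|^{β-n} φ̂(x) dx = γ(β) ∫_{ℝⁿ} (2π)^{-β} |x|^{-β} φ(x) dx, where γ(β) = π^{n/2} 2^β Γ(β/2)/Γ((n-β)/2). -/
open MeasureTheory Real SchwartzMap Filter
open scoped FourierTransform

noncomputable section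

abbrev Rn (n : ℕ) := EuclideanSpace ℝ (Fin n)

/-- The chirp function `e_α(x) = exp(2πi Σₖ (cot αₖ / 2) xₖ²)`. -/
def chirp {n : ℕ} (α : Rn n) (x : Rn n) : ℂ :=
  Complex.exp (2 * (π : ℂ) * Complex.I *
    ((∑ k, Real.cot (α k) / 2 * (x k) ^ 2 : ℝ) : ℂ))

/-- The constant `c(α) = ∏ₖ √(1 - i cot αₖ)`. -/
def cConst {n : ℕ} (α : Rn n) : ℂ :=
  ∏ k, (1 - Complex.I * (Real.cot (α k) : ℂ)) ^ ((1 : ℂ) / 2)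

/-- The FRFT kernel `K_α(x,u)`. -/
def frftKernel {n : ℕ} (α : Rn n) (x u : Rn n) : ℂ :=
  ∏ k, (1 - Complex.I * (Real.cot (α k) : ℂ)) ^ ((1 : ℂ) / 2) *
    Complex.exp (2 * (π : ℂ) * Complex.I *
      ((Real.cot (α k) / 2 * ((x k) ^ 2 + (u k) ^ 2)
        - x k * u k / Real.sin (α k) : ℝ) : ℂ))

/-- The multidimensional fractional Fourier transform. -/
def frft {n : ℕ} (α : Rn n) (f : Rn n → ℂ) (u : Rn n) : ℂ :=
  ∫ x, f x * frftKernel α x u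

/-- `ũ = (u₁ csc α₁, ..., uₙ csc αₙ)`. -/
def tilde {n : ℕ} (α u : Rn n) : Rn n :=
  (EuclideanSpace.equiv (Fin n) ℝ).symm fun k => u k / Real.sin (α k)

/-- `γ(β) = π^{n/2} 2^β Γ(β/2) / Γ((n-β)/2)`. -/
def gammaC (n : ℕ) (β : ℝ) : ℝ :=
  π ^ ((n : ℝ) / 2) * 2 ^ β * Real.Gamma (β / 2) / Real.Gamma (((n : ℝ) - β) / 2)

/-- The classical Riesz potential `I_β`. -/
def rieszPot (n : ℕ) (β : ℝ) (f : Rn n → ℂ) (x : Rn n) : ℂ :=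
  ((1 / gammaC n β : ℝ) : ℂ) * ∫ y, f y / ((‖x - y‖ ^ ((n : ℝ) - β) : ℝ) : ℂ)

/-- The fractional Riesz potential related to chirp functions `I_β^α`. -/
def rieszPotChirp {n : ℕ} (α : Rn n) (β : ℝ) (f : Rn n → ℂ) (x : Rn n) : ℂ :=
  ((1 / gammaC n β : ℝ) : ℂ) * chirp (-α) x *
    ∫ y, f y * chirp α y / ((‖x - y‖ ^ ((n : ℝ) - β) : ℝ) : ℂ)

/-- `c_n = Γ((n+1)/2)/π^{(n+1)/2}`. -/
def nConst (n : ℕ) : ℝ := Real.Gamma (((n : ℝ) + 1) / 2) / π ^ (((n : ℝ) + 1) / 2)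

/-- The j-th fractional Riesz transform related to chirp functions (principal value). -/
def rieszTransChirp {n : ℕ} (α : Rn n) (j : Fin n) (f : Rn n → ℂ) (x : Rn n) : ℂ :=
  ((nConst n : ℝ) : ℂ) * chirp (-α) x *
    limUnder (nhdsWithin (0 : ℝ) (Set.Ioi 0)) fun ε =>
      ∫ y in {y : Rn n | ε < dist x y},
        (((x j - y j) / ‖x - y‖ ^ ((n : ℝ) + 1) : ℝ) : ℂ) * f y * chirp α y

/-- Partial derivative in the k-th coordinate direction. -/
def partialD {n : ℕ} (k : Fin n) (g : Rn n → ℂ) (y : Rn n) : ℂ :=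
  fderiv ℝ g y (EuclideanSpace.single k 1)

/-- `α` has no coordinate in `πℤ`. -/
def notPiZ {n : ℕ} (α : Rn n) : Prop := ∀ k, ∀ m : ℤ, α k ≠ m * π

theorem rk_integrable {n : ℕ} (hn : 1 ≤ n) (a : ℝ) (ha : 0 < a) (han : a < n)
    (ψ : 𝓢(Rn n, ℂ)) :
    Integrable (fun x : Rn n => ‖x‖ ^ (-a) * ‖ψ x‖) := by
  have hm : AEStronglyMeasurable (fun x : Rn n => ‖x‖ ^ (-a) * ‖ψ x‖) := by
    have : Measurable (fun x : Rn n => ‖x‖ ^ (-a)) := by fun_prop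
    exact this.aestronglyMeasurable.mul ψ.continuous.norm.aestronglyMeasurable
  obtain ⟨C, hC⟩ : ∃ C, ∀ x, ‖ψ x‖ ≤ C := ⟨_, fun x => ψ.norm_le_seminorm ℝ x⟩
  have h1 : IntegrableOn (fun x : Rn n => ‖x‖ ^ (-a) * ‖ψ x‖) (Metric.ball 0 1) := by
    apply integrableOn_ball_of_norm_le_rpow (C := C) (α := a) (by simpa using hn)
    · simpa using han
    · refine ae_of_all _ fun x => ?_
      rw [norm_mul, norm_norm, Real.norm_of_nonneg (by positivity), mul_comm]
      gcongr
      exact hC x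
    · exact hm
  have h2 : IntegrableOn (fun x : Rn n => ‖x‖ ^ (-a) * ‖ψ x‖) (Metric.ball 0 1)ᶜ := by
    refine (ψ.integrable.norm.integrableOn).mono' hm.restrict ?_
    refine (ae_restrict_iff' Metric.isOpen_ball.measurableSet.compl).2 (ae_of_all _ fun x hx => ?_)
    have hx : 1 ≤ ‖x‖ := by simpa using hx
    rw [norm_mul, norm_norm, Real.norm_of_nonneg (by positivity)]
    have := Real.rpow_le_one_of_one_le_of_nonpos hx (by linarith : -a ≤ 0)
    nlinarith [norm_nonneg (ψ x)]
  exact (integrableOn_univ).1 (by rw [← Set.union_compl_self (Metric.ball (0 : Rn n) 1)]; exact h1.union h2)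

theorem rk_inner (a r : ℝ) (ha : 0 < a) (hr : 0 < r) :
    ∫ t in Set.Ioi (0 : ℝ), t ^ (a / 2 - 1) * rexp (-(π * r ^ 2 * t))
      = Real.Gamma (a / 2) * π ^ (-(a / 2)) * r ^ (-a) := by
  rw [Real.integral_rpow_mul_exp_neg_mul_Ioi (by positivity) (by positivity)]
  rw [one_div, Real.inv_rpow (by positivity), ← Real.rpow_neg (by positivity),
    Real.mul_rpow (by positivity) (by positivity), ← Real.rpow_natCast, ← Real.rpow_mul hr.le]
  have : ((2 : ℕ) : ℝ) * -(a / 2) = -a := by push_cast; ring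
  rw [this]; ring

theorem rk_inner_int (a r : ℝ) (ha : 0 < a) (hr : 0 < r) :
    IntegrableOn (fun t : ℝ => t ^ (a / 2 - 1) * rexp (-(π * r ^ 2 * t))) (Set.Ioi 0) := by
  have := integrableOn_rpow_mul_exp_neg_mul_rpow (p := 1) (s := a / 2 - 1) (b := π * r ^ 2)
    (by linarith) one_pos (by positivity)
  simpa [neg_mul] using this

theorem rk_mellin {n : ℕ} (hn : 1 ≤ n) (a : ℝ) (ha : 0 < a) (han : a < n)
    (ψ : 𝓢(Rn n, ℂ)) :
    ∫ t in Set.Ioi (0 : ℝ), ((t ^ (a / 2 - 1) : ℝ) : ℂ) *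
        ∫ x : Rn n, ((rexp (-(π * ‖x‖ ^ 2 * t)) : ℝ) : ℂ) * ψ x
      = ((Real.Gamma (a / 2) * π ^ (-(a / 2)) : ℝ) : ℂ) *
        ∫ x : Rn n, ((‖x‖ ^ (-a) : ℝ) : ℂ) * ψ x := by
  have : Nonempty (Fin n) := ⟨⟨0, hn⟩⟩
  have h0 : ∀ᵐ x : Rn n, 0 < ‖x‖ := by
    filter_upwards [compl_mem_ae_iff.2 (measure_singleton (0 : Rn n))] with x hx
    exact norm_pos_iff.2 hx
  have hF : Integrable (Function.uncurry fun (t : ℝ) (x : Rn n) =>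
      ((t ^ (a / 2 - 1) * rexp (-(π * ‖x‖ ^ 2 * t)) : ℝ) : ℂ) * ψ x)
      ((volume.restrict (Set.Ioi 0)).prod volume) := by
    have hmeas : Measurable (Function.uncurry fun (t : ℝ) (x : Rn n) =>
      ((t ^ (a / 2 - 1) * rexp (-(π * ‖x‖ ^ 2 * t)) : ℝ) : ℂ) * ψ x) := by
      have := ψ.continuous.measurable
      unfold Function.uncurry
      fun_prop
    rw [integrable_prod_iff' hmeas.aestronglyMeasurable]
    constructor
    · filter_upwards [h0] with x hx
      exact ((rk_inner_int a ‖x‖ ha hx).ofReal (𝕜 := ℂ)).mul_const (ψ x)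
    · refine ((rk_integrable hn a ha han ψ).const_mul
        (Real.Gamma (a / 2) * π ^ (-(a / 2)))).congr ?_
      filter_upwards [h0] with x hx
      rw [← mul_assoc, ← rk_inner a ‖x‖ ha hx, ← integral_mul_const]
      refine setIntegral_congr_fun measurableSet_Ioi fun t ht => ?_
      have ht : 0 < t := ht
      simp only [Function.uncurry, norm_mul, Complex.norm_real]
      rw [Real.norm_of_nonneg (by positivity), Real.norm_of_nonneg (by positivity)]
  have := integral_integral_swap hF
  calc _ = ∫ t in Set.Ioi (0 : ℝ), ∫ x : Rn n,
      ((t ^ (a / 2 - 1) * rexp (-(π * ‖x‖ ^ 2 * t)) : ℝ) : ℂ) * ψ x := by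
        congr 1; ext t
        rw [← integral_const_mul]
        congr 1; ext x; push_cast; ring
    _ = _ := this
    _ = _ := by
        rw [← integral_const_mul]
        apply integral_congr_ae
        filter_upwards [h0] with x hx
        rw [integral_mul_const, integral_complex_ofReal, rk_inner a ‖x‖ ha hx]
        push_cast; ring

theorem rk_gauss {n : ℕ} (φ : 𝓢(Rn n, ℂ)) (t : ℝ) (ht : 0 < t) :
    ∫ x : Rn n, ((rexp (-(π * ‖x‖ ^ 2 * t)) : ℝ) : ℂ) * 𝓕 φ x
      = ((t ^ (-((n : ℝ) / 2)) : ℝ) : ℂ) *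
        ∫ x : Rn n, ((rexp (-(π * ‖x‖ ^ 2 * t⁻¹)) : ℝ) : ℂ) * φ x := by
  have hb : 0 < ((π * t : ℝ) : ℂ).re := by rw [Complex.ofReal_re]; positivity
  have hg : Integrable (fun x : Rn n => Complex.exp (-((π * t : ℝ) : ℂ) * ‖x‖ ^ 2)) := by
    simpa using GaussianFourier.integrable_cexp_neg_mul_sq_norm_add hb 0 (0 : Rn n)
  have h := VectorFourier.integral_fourierIntegral_smul_eq_flip (L := innerₗ (Rn n))
    Real.continuous_fourierChar continuous_inner hg (φ.integrable (μ := volume))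
  have h2 : ∫ ξ : Rn n, 𝓕 (fun x : Rn n => Complex.exp (-((π * t : ℝ) : ℂ) * ‖x‖ ^ 2)) ξ * φ ξ
    = ∫ x : Rn n, Complex.exp (-((π * t : ℝ) : ℂ) * ‖x‖ ^ 2) * 𝓕 (⇑φ) x := by
    simpa using! h
  rw [SchwartzMap.fourier_coe, ← integral_const_mul]
  calc _ = _ := by
        congr 1; ext x; congr 1; push_cast; congr 1; ring
    _ = _ := h2.symm
    _ = _ := by
        congr 1; ext x
        rw [fourier_gaussian_innerProductSpace hb, ← mul_assoc]
        congr 1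
        have hπ := Real.pi_pos.ne'
        have e1 : ((π : ℂ) / ((π * t : ℝ) : ℂ)) = ((t⁻¹ : ℝ) : ℂ) := by
          rw [← Complex.ofReal_div]; congr 1; field_simp
        have e2 : ((Module.finrank ℝ (Rn n) : ℂ) / 2) = (((n : ℝ) / 2 : ℝ) : ℂ) := by
          simp
        rw [e1, e2, ← Complex.ofReal_cpow (by positivity), Real.inv_rpow ht.le,
          ← Real.rpow_neg ht.le, Complex.ofReal_exp]
        congr 2
        rw [show (-(π : ℂ) ^ 2 * ‖x‖ ^ 2 / ((π * t : ℝ) : ℂ))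
          = ((-π ^ 2 * ‖x‖ ^ 2 / (π * t) : ℝ) : ℂ) by push_cast; ring]
        congr 1
        field_simp

/-- Fourier transform of `|x|^{β-n}` in the distributional sense. -/
theorem fourier_riesz_kernel {n : ℕ} (hn : 1 ≤ n) (β : ℝ) (hβ : 0 < β) (hβn : β < n)
    (φ : 𝓢(Rn n, ℂ)) :
    ∫ x : Rn n, ((‖x‖ ^ (β - (n : ℝ)) : ℝ) : ℂ) * 𝓕 (⇑φ) x
      = (gammaC n β : ℂ) *
          ∫ x : Rn n, (((2 * π) ^ (-β) * ‖x‖ ^ (-β) : ℝ) : ℂ) * φ x := by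
  have h1 := rk_mellin hn ((n : ℝ) - β) (by linarith) (by linarith) (𝓕 φ)
  have h2 := rk_mellin hn β hβ hβn φ
  have h3 := integral_comp_rpow_Ioi (fun t : ℝ => ((t ^ (β / 2 - 1) : ℝ) : ℂ) *
        ∫ x : Rn n, ((rexp (-(π * ‖x‖ ^ 2 * t)) : ℝ) : ℂ) * φ x) (p := -1) (by norm_num)
  rw [h2] at h3
  have h4 : ∫ t in Set.Ioi (0 : ℝ), ((t ^ (((n : ℝ) - β) / 2 - 1) : ℝ) : ℂ) *
        ∫ x : Rn n, ((rexp (-(π * ‖x‖ ^ 2 * t)) : ℝ) : ℂ) * 𝓕 φ x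
      = ((Real.Gamma (β / 2) * π ^ (-(β / 2)) : ℝ) : ℂ) *
        ∫ x : Rn n, ((‖x‖ ^ (-β) : ℝ) : ℂ) * φ x := by
    rw [← h3]
    refine setIntegral_congr_fun measurableSet_Ioi fun t ht => ?_
    have ht : 0 < t := ht
    beta_reduce
    rw [rk_gauss φ t ht, Complex.real_smul, ← mul_assoc, ← mul_assoc, Real.rpow_neg_one,
      ← Complex.ofReal_mul, ← Complex.ofReal_mul]
    congr 2
    rw [abs_neg, abs_one, one_mul, Real.inv_rpow ht.le, ← Real.rpow_neg ht.le,
      ← Real.rpow_add ht, ← Real.rpow_add ht]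
    congr 1; ring
  rw [h4] at h1
  rw [SchwartzMap.fourier_coe, neg_sub] at h1
  have hG : Real.Gamma (((n : ℝ) - β) / 2) ≠ 0 := (Real.Gamma_pos_of_pos (by linarith)).ne'
  have hc : ((Real.Gamma (((n : ℝ) - β) / 2) * π ^ (-(((n : ℝ) - β) / 2)) : ℝ) : ℂ) ≠ 0 := by
    rw [Complex.ofReal_ne_zero]
    exact mul_ne_zero hG (by positivity)
  apply mul_left_cancel₀ hc
  rw [← h1]
  simp_rw [Complex.ofReal_mul ((2 * π) ^ (-β)), mul_assoc]
  rw [integral_const_mul, ← mul_assoc, ← mul_assoc, ← Complex.ofReal_mul,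
    ← Complex.ofReal_mul]
  congr 2
  unfold gammaC
  rw [Real.mul_rpow (by norm_num) Real.pi_pos.le]
  have e : π ^ (-(β / 2)) = π ^ (-(((n : ℝ) - β) / 2)) * π ^ ((n : ℝ) / 2) * π ^ (-β) := by
    rw [← Real.rpow_add Real.pi_pos, ← Real.rpow_add Real.pi_pos]; congr 1; ring
  have e2 : (2 : ℝ) ^ β * 2 ^ (-β) = 1 := by
    rw [← Real.rpow_add (by norm_num)]; simp
  rw [e]
  field_simp
  linear_combination (-1 : ℝ) * e2
end
end

section
/- Let β ∈ (0,n) and α ∈ ℝⁿ with no coordinate in πℤ. For every Schwartz function f, the fractional Riesz potential related to chirp functions satisfies F_α(I_β^α f)(u) = (2π)^{-β} |ũ|^{-β} F_α(f)(u) in the sense of tempered distributions, where ũ = (u₁ csc α₁, ..., uₙ csc αₙ). -/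
open MeasureTheory Real SchwartzMap Filter
open scoped FourierTransform

noncomputable section

lemma aux_exp_temperate :
    Function.HasTemperateGrowth (fun t : ℝ => Complex.exp ((t : ℂ) * Complex.I)) := by
  have hd : ∀ m : ℕ, iteratedDeriv m (fun t : ℝ => Complex.exp ((t : ℂ) * Complex.I))
      = fun t : ℝ => Complex.I ^ m * Complex.exp ((t : ℂ) * Complex.I) := by
    intro m
    induction m with
    | zero => simp
    | succ m ih =>
      rw [iteratedDeriv_succ, ih]
      ext t
      have h1 : HasDerivAt (fun t : ℝ => (t : ℂ) * Complex.I) Complex.I t := by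
        simpa using (Complex.ofRealCLM.hasDerivAt (x := t)).mul_const Complex.I
      have h2 := (h1.cexp).const_mul (Complex.I ^ m)
      rw [h2.deriv]
      ring
  refine ⟨?_, fun m => ⟨0, 1, fun x => ?_⟩⟩
  · have : ContDiff ℝ (⊤ : ℕ∞) (fun t : ℝ => (t : ℂ) * Complex.I) :=
      Complex.ofRealCLM.contDiff.mul contDiff_const
    exact this.cexp
  · rw [norm_iteratedFDeriv_eq_norm_iteratedDeriv, hd]
    simp [Complex.norm_exp]

lemma aux_chirp_temperate {n : ℕ} (α : Rn n) : Function.HasTemperateGrowth (chirp α) := by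
  have h : Function.HasTemperateGrowth
      (fun x : Rn n => 2 * π * ∑ k, Real.cot (α k) / 2 * (x k) ^ 2) := by
    have hk : ∀ k, Function.HasTemperateGrowth (fun x : Rn n => x k) := fun k =>
      (EuclideanSpace.proj (𝕜 := ℝ) k : Rn n →L[ℝ] ℝ).hasTemperateGrowth
    refine (Function.HasTemperateGrowth.const _).mul ?_
    have := Function.HasTemperateGrowth.sum (s := Finset.univ)
      (f := fun k (x : Rn n) => Real.cot (α k) / 2 * (x k) ^ 2)
      (fun k _ => (Function.HasTemperateGrowth.const _).mul ((hk k).pow 2))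
    convert this using 1
  convert aux_exp_temperate.comp h using 1
  ext x
  simp only [chirp, Function.comp]
  congr 1
  push_cast
  ring

lemma aux_mul_chirp {n : ℕ} (α : Rn n) (f : 𝓢(Rn n, ℂ)) :
    ∃ g : 𝓢(Rn n, ℂ), ∀ x, g x = f x * chirp α x :=
  ⟨SchwartzMap.smulLeftCLM ℂ (chirp α) f, fun x => by
    rw [SchwartzMap.smulLeftCLM_apply_apply (aux_chirp_temperate α), smul_eq_mul, mul_comm]⟩

lemma aux_loc {n : ℕ} (b : ℝ) (hb : b < n) (hn : 0 < n) :
    Integrable ((Metric.ball (0 : Rn n) 1).indicator (fun z => ‖z‖ ^ (-b))) := by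
  have : Nonempty (Fin n) := ⟨⟨0, hn⟩⟩
  rw [integrable_indicator_iff measurableSet_ball]
  rw [integrableOn_fun_norm_addHaar volume (f := fun r : ℝ => r ^ (-b)) (E := Rn n)]
  have h1 : IntegrableOn (fun y : ℝ => y ^ ((n : ℝ) - 1 - b)) (Set.Ioo 0 1) := by
    rw [intervalIntegral.integrableOn_Ioo_rpow_iff one_pos]; linarith
  refine h1.congr_fun (fun y hy => ?_) measurableSet_Ioo
  simp only [finrank_euclideanSpace, Fintype.card_fin, smul_eq_mul]
  rw [← Real.rpow_natCast, ← Real.rpow_add hy.1, Nat.cast_sub hn]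
  congr 1
  push_cast
  ring

lemma aux_bd {n : ℕ} (b : ℝ) (hb : 0 ≤ b) (z : Rn n) :
    ‖z‖ ^ (-b) ≤ (Metric.ball (0 : Rn n) 1).indicator (fun z => ‖z‖ ^ (-b)) z + 1 := by
  by_cases hz : z ∈ Metric.ball (0 : Rn n) 1
  · rw [Set.indicator_of_mem hz]; linarith
  · rw [Set.indicator_of_notMem hz]
    have : 1 ≤ ‖z‖ := by simpa using hz
    have := Real.rpow_le_one_of_one_le_of_nonpos this (neg_nonpos.2 hb)
    linarith

lemma aux_mellin {X : Type*} [MeasurableSpace X] (μ : Measure X) [SFinite μ] (w : X → ℂ)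
    (hw : AEStronglyMeasurable w μ) (r : X → ℝ) (hr : Measurable r) (hrp : ∀ᵐ x ∂μ, 0 < r x)
    (a : ℝ) (ha : 0 < a) (hi : Integrable (fun x => w x * ((r x ^ (-(2 * a)) : ℝ) : ℂ)) μ) :
    ((Real.Gamma a * π ^ (-a) : ℝ) : ℂ) * ∫ x, w x * ((r x ^ (-(2 * a)) : ℝ) : ℂ) ∂μ
      = ∫ t in Set.Ioi (0 : ℝ), ((t ^ (a - 1) : ℝ) : ℂ) *
          ∫ x, w x * ((Real.exp (-(π * t * r x ^ 2)) : ℝ) : ℂ) ∂μ := by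
  have key : ∀ ρ : ℝ, 0 < ρ → ∫ t in Set.Ioi (0 : ℝ), t ^ (a - 1) * Real.exp (-(π * ρ ^ 2 * t))
      = Real.Gamma a * π ^ (-a) * ρ ^ (-(2 * a)) := by
    intro ρ hρ
    rw [Real.integral_rpow_mul_exp_neg_mul_Ioi ha (by positivity), one_div,
      Real.inv_rpow (by positivity), Real.mul_rpow (by positivity) (by positivity),
      ← Real.rpow_natCast, ← Real.rpow_mul hρ.le, Real.rpow_neg (by positivity),
      Real.rpow_neg (by positivity), mul_inv]
    push_cast
    ring
  have keyi : ∀ ρ : ℝ, 0 < ρ → Integrable (fun t => t ^ (a - 1) * Real.exp (-(π * ρ ^ 2 * t)))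
      (volume.restrict (Set.Ioi (0 : ℝ))) := by
    intro ρ hρ
    have := integrableOn_rpow_mul_exp_neg_mul_rpow (s := a - 1) (p := 1) (b := π * ρ ^ 2)
      (by linarith) one_pos (by positivity)
    simpa [IntegrableOn, neg_mul] using this
  let F : X → ℝ → ℂ := fun x t => w x * ((t ^ (a - 1) * Real.exp (-(π * r x ^ 2 * t)) : ℝ) : ℂ)
  have hF : Integrable (Function.uncurry F) (μ.prod (volume.restrict (Set.Ioi (0 : ℝ)))) := by
    rw [integrable_prod_iff]
    · constructor
      · filter_upwards [hrp] with x hx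
        exact ((keyi _ hx).ofReal).const_mul (w x)
      · have h1 := (hi.norm).const_mul (Real.Gamma a * π ^ (-a))
        refine h1.congr ?_
        filter_upwards [hrp] with x hx
        have : ∫ t in Set.Ioi (0 : ℝ), ‖F x t‖ = ‖w x‖ *
            ∫ t in Set.Ioi (0 : ℝ), t ^ (a - 1) * Real.exp (-(π * r x ^ 2 * t)) := by
          rw [← integral_const_mul]
          refine setIntegral_congr_fun measurableSet_Ioi (fun t ht => ?_)
          have ht' : 0 < t := ht
          simp only [F, norm_mul, Complex.norm_real, Real.norm_eq_abs]
          rw [abs_of_nonneg (by positivity), abs_of_nonneg (by positivity)]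
        simp only [Function.uncurry]
        rw [this, key _ hx, norm_mul, Complex.norm_real, Real.norm_of_nonneg (by positivity)]
        ring
    · refine AEStronglyMeasurable.mul hw.comp_fst ?_
      refine Measurable.aestronglyMeasurable ?_
      fun_prop
  have h := integral_integral_swap hF
  have hL : ∫ x, (∫ t in Set.Ioi (0 : ℝ), F x t) ∂μ
      = ((Real.Gamma a * π ^ (-a) : ℝ) : ℂ) * ∫ x, w x * ((r x ^ (-(2 * a)) : ℝ) : ℂ) ∂μ := by
    rw [← integral_const_mul]
    refine integral_congr_ae ?_
    filter_upwards [hrp] with x hx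
    simp only [F]
    rw [integral_const_mul, integral_complex_ofReal, key _ hx]
    push_cast
    ring
  rw [← hL, h]
  refine setIntegral_congr_fun measurableSet_Ioi (fun t ht => ?_)
  simp only [F]
  rw [← integral_const_mul]
  congr 1
  ext x
  push_cast
  ring_nf
open scoped Convolution in
lemma aux_gauss {n : ℕ} (t : ℝ) (ht : 0 < t) (ξ : Rn n) :
    𝓕 (fun v : Rn n => ((Real.exp (-(π * t * ‖v‖ ^ 2)) : ℝ) : ℂ)) ξ
      = ((t ^ (-((n : ℝ) / 2)) * Real.exp (-(π * t⁻¹ * ‖ξ‖ ^ 2)) : ℝ) : ℂ) := by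
  have h := fourier_gaussian_innerProductSpace (V := Rn n) (b := ((π * t : ℝ) : ℂ))
    (by rw [Complex.ofReal_re]; positivity) ξ
  have e1 : (fun v : Rn n => ((Real.exp (-(π * t * ‖v‖ ^ 2)) : ℝ) : ℂ))
      = fun v : Rn n => Complex.exp (-((π * t : ℝ) : ℂ) * (‖v‖ : ℂ) ^ 2) := by
    ext v; push_cast; congr 1; ring
  rw [e1, h, finrank_euclideanSpace, Fintype.card_fin]
  have e2 : (π : ℂ) / ((π * t : ℝ) : ℂ) = ((t⁻¹ : ℝ) : ℂ) := by
    have : (π : ℂ) ≠ 0 := by exact_mod_cast Real.pi_ne_zero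
    have : (t : ℂ) ≠ 0 := by exact_mod_cast ht.ne'
    push_cast
    field_simp
  have e3 : ((n : ℂ) / 2) = (((n : ℝ) / 2 : ℝ) : ℂ) := by push_cast; rfl
  rw [e2, e3, ← Complex.ofReal_cpow (by positivity), Real.inv_rpow ht.le, ← Real.rpow_neg ht.le]
  push_cast
  congr 2
  have : (π : ℂ) ≠ 0 := by exact_mod_cast Real.pi_ne_zero
  have : (t : ℂ) ≠ 0 := by exact_mod_cast ht.ne'
  field_simp

lemma aux_gauss_int {n : ℕ} (t : ℝ) (ht : 0 < t) :
    Integrable (fun v : Rn n => ((Real.exp (-(π * t * ‖v‖ ^ 2)) : ℝ) : ℂ)) := by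
  have h := GaussianFourier.integrable_cexp_neg_mul_sq_norm_add (V := Rn n)
    (b := ((π * t : ℝ) : ℂ)) (by rw [Complex.ofReal_re]; positivity) 0 0
  convert h using 1
  ext v; push_cast; congr 1; simp

open scoped Convolution in
lemma aux_A {n : ℕ} (T : Rn n → Rn n) (hT : Continuous T) (g h H : Rn n → ℂ)
    (hg : Integrable g) (hh : Integrable h) (hHc : Continuous H)
    (hH : ∀ x, H x = ∫ u, Complex.exp (((-2 * π * inner ℝ x (T u) : ℝ) : ℂ) * Complex.I) * h u)
    (t : ℝ) (ht : 0 < t) :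
    ∫ p : Rn n × Rn n, (g p.2 * H p.1) * ((Real.exp (-(π * t * ‖p.1 - p.2‖ ^ 2)) : ℝ) : ℂ)
      = ∫ u, (h u * 𝓕 g (T u)) *
        ((t ^ (-((n : ℝ) / 2)) * Real.exp (-(π * t⁻¹ * ‖T u‖ ^ 2)) : ℝ) : ℂ) := by
  set G : Rn n → ℂ := fun v : Rn n => ((Real.exp (-(π * t * ‖v‖ ^ 2)) : ℝ) : ℂ) with hG
  have hGi : Integrable G := aux_gauss_int t ht
  have hHb : ∀ x, ‖H x‖ ≤ ∫ u, ‖h u‖ := by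
    intro x
    rw [hH]
    refine (norm_integral_le_integral_norm _).trans (le_of_eq ?_)
    congr 1
    ext u
    rw [norm_mul, Complex.norm_exp_ofReal_mul_I, one_mul]
  have hc : Integrable (fun p : Rn n × Rn n => g p.2 * G (p.1 - p.2)) (volume.prod volume) :=
    hg.convolution_integrand (ContinuousLinearMap.mul ℂ ℂ) hGi
  have hi : Integrable (fun p : Rn n × Rn n => (g p.2 * H p.1) * G (p.1 - p.2))
      (volume.prod volume) := by
    have := hc.bdd_mul (c := ∫ u, ‖h u‖) (f := fun p : Rn n × Rn n => H p.1)
      (by fun_prop) (Filter.Eventually.of_forall fun p => hHb p.1)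
    refine this.congr (Filter.Eventually.of_forall fun p => ?_)
    simp only
    ring
  have hk : Integrable (g ⋆[ContinuousLinearMap.mul ℂ ℂ] G) :=
    hg.integrable_convolution (ContinuousLinearMap.mul ℂ ℂ) hGi
  set k := (g ⋆[ContinuousLinearMap.mul ℂ ℂ] G) with hkdef
  change ∫ p : Rn n × Rn n, (g p.2 * H p.1) * G (p.1 - p.2) = _
  rw [Measure.volume_eq_prod, integral_prod _ hi]
  have s1 : ∀ x, ∫ y, (g y * H x) * G (x - y) = ∫ u, k x *
      (Complex.exp (((-2 * π * inner ℝ x (T u) : ℝ) : ℂ) * Complex.I) * h u) := by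
    intro x
    rw [integral_const_mul, ← hH, hkdef, MeasureTheory.convolution_def, ← integral_mul_const]
    congr 1
    ext y
    simp only [ContinuousLinearMap.mul_apply']
    ring
  simp only [s1]
  have hkh : Integrable (Function.uncurry fun x u => k x *
      (Complex.exp (((-2 * π * inner ℝ x (T u) : ℝ) : ℂ) * Complex.I) * h u))
      (volume.prod volume) := by
    have := (hk.mul_prod hh).bdd_mul (c := 1) (f := fun p : Rn n × Rn n =>
      Complex.exp (((-2 * π * inner ℝ p.1 (T p.2) : ℝ) : ℂ) * Complex.I))
      (Continuous.aestronglyMeasurable (by fun_prop))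
      (Filter.Eventually.of_forall fun p => by rw [Complex.norm_exp_ofReal_mul_I])
    refine this.congr (Filter.Eventually.of_forall fun p => ?_)
    simp only [Function.uncurry]
    ring
  rw [integral_integral_swap hkh]
  congr 1
  ext u
  rw [← aux_gauss t ht, mul_assoc, ← Real.fourier_mul_convolution_eq hg hGi, Real.fourier_eq',
    ← integral_const_mul]
  congr 1
  ext x
  rw [← hkdef, smul_eq_mul]
  ring

lemma aux_core {n : ℕ} (β : ℝ) (hβ : 0 < β) (hβn : β < n)
    (T : Rn n → Rn n) (hT : Continuous T) (hTn : ∀ u, ‖u‖ ≤ ‖T u‖) (g h H : 𝓢(Rn n, ℂ))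
    (hH : ∀ x, H x = ∫ u, Complex.exp (((-2 * π * inner ℝ x (T u) : ℝ) : ℂ) * Complex.I) * h u) :
    ((1 / gammaC n β : ℝ) : ℂ) * ∫ x, (∫ y, g y / ((‖x - y‖ ^ ((n : ℝ) - β) : ℝ) : ℂ)) * H x
      = ∫ u, (((2 * π) ^ (-β) * ‖T u‖ ^ (-β) : ℝ) : ℂ) * (h u * 𝓕 (g : Rn n → ℂ) (T u)) := by
  have hn : 0 < n := by
    have : (0 : ℝ) < n := hβ.trans hβn
    exact_mod_cast this
  have : Nonempty (Fin n) := ⟨⟨0, hn⟩⟩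
  have hbdd : ∀ q : 𝓢(Rn n, ℂ), ∃ C : ℝ, ∀ x, ‖q x‖ ≤ C := fun q => by
    obtain ⟨C, hC⟩ := q.decay 0 0
    exact ⟨C, fun x => by simpa using hC.2 x⟩
  obtain ⟨Bg, hBg⟩ := hbdd g
  obtain ⟨Bh, hBh⟩ := hbdd h
  obtain ⟨Bf, hBf⟩ := hbdd (𝓕 g)
  have hgF : ∀ ξ, 𝓕 (g : Rn n → ℂ) ξ = (𝓕 g) ξ := fun ξ => by rw [SchwartzMap.fourier_coe]
  set s : ℝ := ((n : ℝ) - β) / 2 with hs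
  have hs0 : 0 < s := by rw [hs]; linarith
  -- left side
  have hiL : Integrable (fun p : Rn n × Rn n => (g p.2 * H p.1) *
      ((‖p.1 - p.2‖ ^ (-(2 * s)) : ℝ) : ℂ)) (volume.prod volume) := by
    have hφ := aux_loc (n := n) (2 * s) (by rw [hs]; linarith) hn
    set φ := (Metric.ball (0 : Rn n) 1).indicator (fun z : Rn n => ‖z‖ ^ (-(2 * s))) with hφd
    have h1 : Integrable (fun p : Rn n × Rn n => ‖H p.2‖ * φ (p.1 - p.2)) (volume.prod volume) :=
      H.integrable.norm.convolution_integrand (ContinuousLinearMap.mul ℝ ℝ) hφ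
    have h2 : Integrable (fun p : Rn n × Rn n => ‖H p.1‖ * φ (p.2 - p.1)) (volume.prod volume) :=
      h1.swap
    have h3 : Integrable (fun p : Rn n × Rn n => ‖H p.1‖ * ‖g p.2‖) (volume.prod volume) :=
      H.integrable.norm.mul_prod g.integrable.norm
    refine ((h2.const_mul Bg).add h3).mono' ?_ (Filter.Eventually.of_forall fun p => ?_)
    · refine Measurable.aestronglyMeasurable ?_
      have := g.continuous.measurable
      have := H.continuous.measurable
      fun_prop
    · have hb := aux_bd (2 * s) (by positivity) (p.2 - p.1)
      rw [← hφd] at hb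
      have hφ0 : 0 ≤ φ (p.2 - p.1) := Set.indicator_nonneg (fun z _ => by positivity) _
      simp only [Pi.add_apply]
      rw [norm_mul, norm_mul, Complex.norm_real, Real.norm_of_nonneg (by positivity),
        norm_sub_rev]
      calc ‖g p.2‖ * ‖H p.1‖ * ‖p.2 - p.1‖ ^ (-(2 * s))
          ≤ ‖g p.2‖ * ‖H p.1‖ * (φ (p.2 - p.1) + 1) := by gcongr
        _ = ‖g p.2‖ * (‖H p.1‖ * φ (p.2 - p.1)) + ‖H p.1‖ * ‖g p.2‖ := by ring
        _ ≤ _ := by gcongr; exact hBg _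
  have hL := aux_mellin (volume.prod volume) (fun p : Rn n × Rn n => g p.2 * H p.1)
    (by
      have := g.continuous
      have := H.continuous
      exact Continuous.aestronglyMeasurable (by fun_prop))
    (fun p => ‖p.1 - p.2‖) (by fun_prop)
    (by
      have : ∀ᵐ p ∂((volume : Measure (Rn n)).prod (volume : Measure (Rn n))), p.1 - p.2 ≠ 0 := by
        have hm : MeasurableSet {p : Rn n × Rn n | p.1 - p.2 ≠ 0} :=
          (measurableSet_singleton (0 : Rn n)).compl.preimage (by fun_prop)
        rw [Measure.ae_prod_iff_ae_ae hm]
        refine Filter.Eventually.of_forall fun x => ?_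
        have : ∀ᵐ y ∂(volume : Measure (Rn n)), y ≠ x := by
          rw [ae_iff]; simp
        filter_upwards [this] with y hy
        exact sub_ne_zero.2 hy.symm
      filter_upwards [this] with p hp
      exact norm_pos_iff.2 hp) s hs0 hiL
  -- right side
  have hiR : Integrable (fun u : Rn n => (h u * 𝓕 (g : Rn n → ℂ) (T u)) *
      ((‖T u‖ ^ (-(2 * (β / 2))) : ℝ) : ℂ)) := by
    have hφ := aux_loc (n := n) (2 * (β / 2)) (by linarith) hn
    set φ := (Metric.ball (0 : Rn n) 1).indicator (fun z : Rn n => ‖z‖ ^ (-(2 * (β / 2)))) with hφd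
    refine ((hφ.const_mul (Bh * Bf)).add (h.integrable.norm.mul_const Bf)).mono' ?_ ?_
    · simp only [hgF]
      refine Measurable.aestronglyMeasurable ?_
      have := (𝓕 g).continuous.measurable
      have := h.continuous.measurable
      have := hT.measurable
      fun_prop
    · have : ∀ᵐ y ∂(volume : Measure (Rn n)), y ≠ 0 := by
        rw [ae_iff]; simp
      filter_upwards [this] with u hu
      have hu0 : 0 < ‖u‖ := norm_pos_iff.2 hu
      have hb := aux_bd (2 * (β / 2)) (by positivity) u
      rw [← hφd] at hb
      have hφ0 : 0 ≤ φ u := Set.indicator_nonneg (fun z _ => by positivity) _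
      have hmono : ‖T u‖ ^ (-(2 * (β / 2))) ≤ ‖u‖ ^ (-(2 * (β / 2))) :=
        Real.rpow_le_rpow_of_nonpos hu0 (hTn u) (by linarith)
      have hBf0 : 0 ≤ Bf := (norm_nonneg _).trans (hBf 0)
      simp only [Pi.add_apply, hgF]
      rw [norm_mul, norm_mul, Complex.norm_real, Real.norm_of_nonneg (by positivity)]
      calc ‖h u‖ * ‖(𝓕 g) (T u)‖ * ‖T u‖ ^ (-(2 * (β / 2)))
          ≤ ‖h u‖ * Bf * (φ u + 1) := by
            gcongr
            · exact hBf _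
            · exact hmono.trans hb
        _ = ‖h u‖ * Bf * φ u + ‖h u‖ * Bf := by ring
        _ ≤ _ := by gcongr; exact hBh _
  have hR := aux_mellin volume (fun u : Rn n => h u * 𝓕 (g : Rn n → ℂ) (T u))
    (by
      simp only [hgF]
      have := (𝓕 g).continuous
      have := h.continuous
      exact Continuous.aestronglyMeasurable (by fun_prop))
    (fun u => ‖T u‖) (by have := hT.measurable; fun_prop)
    (by
      have : ∀ᵐ y ∂(volume : Measure (Rn n)), y ≠ 0 := by
        rw [ae_iff]; simp
      filter_upwards [this] with u hu
      exact (norm_pos_iff.2 hu).trans_le (hTn u)) (β / 2) (by positivity) hiR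
  -- the t integrals agree
  have hmid : ∫ t in Set.Ioi (0 : ℝ), ((t ^ (s - 1) : ℝ) : ℂ) *
          ∫ p : Rn n × Rn n, (g p.2 * H p.1) * ((Real.exp (-(π * t * ‖p.1 - p.2‖ ^ 2)) : ℝ) : ℂ)
            ∂(volume.prod volume)
      = ∫ t in Set.Ioi (0 : ℝ), ((t ^ (β / 2 - 1) : ℝ) : ℂ) *
          ∫ u, (h u * 𝓕 (g : Rn n → ℂ) (T u)) * ((Real.exp (-(π * t * ‖T u‖ ^ 2)) : ℝ) : ℂ) := by
    rw [← integral_comp_rpow_Ioi (fun t : ℝ => ((t ^ (β / 2 - 1) : ℝ) : ℂ) *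
          ∫ u, (h u * 𝓕 (g : Rn n → ℂ) (T u)) * ((Real.exp (-(π * t * ‖T u‖ ^ 2)) : ℝ) : ℂ))
          (p := -1) (by norm_num)]
    refine setIntegral_congr_fun measurableSet_Ioi (fun t ht => ?_)
    have ht' : 0 < t := ht
    rw [← Measure.volume_eq_prod, aux_A T hT g h H g.integrable h.integrable H.continuous hH t ht']
    rw [Real.rpow_neg_one]
    have e1 : ∀ u, (h u * 𝓕 (g : Rn n → ℂ) (T u)) *
        ((t ^ (-((n : ℝ) / 2)) * Real.exp (-(π * t⁻¹ * ‖T u‖ ^ 2)) : ℝ) : ℂ)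
        = ((t ^ (-((n : ℝ) / 2)) : ℝ) : ℂ) * ((h u * 𝓕 (g : Rn n → ℂ) (T u)) *
          ((Real.exp (-(π * t⁻¹ * ‖T u‖ ^ 2)) : ℝ) : ℂ)) := by
      intro u; push_cast; ring
    simp only [e1]
    rw [integral_const_mul, ← mul_assoc, Complex.real_smul, ← mul_assoc, ← Complex.ofReal_mul,
      ← Complex.ofReal_mul]
    congr 2
    rw [abs_neg, abs_one, one_mul, Real.inv_rpow ht'.le, ← Real.rpow_neg ht'.le,
      ← Real.rpow_add ht', ← Real.rpow_add ht']
    congr 1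
    rw [hs]; ring
  rw [hmid, ← hR] at hL
  have hLe : ∫ x, (∫ y, g y / ((‖x - y‖ ^ ((n : ℝ) - β) : ℝ) : ℂ)) * H x
      = ∫ p : Rn n × Rn n, (g p.2 * H p.1) *
      ((‖p.1 - p.2‖ ^ (-(2 * s)) : ℝ) : ℂ) ∂(volume.prod volume) := by
    rw [integral_prod _ hiL]
    congr 1
    ext x
    rw [← integral_mul_const]
    congr 1
    ext y
    have : -(2 * s) = -((n : ℝ) - β) := by rw [hs]; ring
    rw [this, Real.rpow_neg (norm_nonneg _)]
    push_cast
    ring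
  rw [hLe]
  have hG1 : 0 < Real.Gamma s := Real.Gamma_pos_of_pos hs0
  have hG2 : 0 < Real.Gamma (β / 2) := Real.Gamma_pos_of_pos (by positivity)
  have hconst : (1 / gammaC n β) * (Real.Gamma (β / 2) * π ^ (-(β / 2)))
      = (2 * π) ^ (-β) * (Real.Gamma s * π ^ (-s)) := by
    have e : gammaC n β = π ^ ((n : ℝ) / 2) * 2 ^ β * Real.Gamma (β / 2) / Real.Gamma s := rfl
    have e1 : π ^ (-s) = π ^ (-((n : ℝ) / 2)) * π ^ (β / 2) := by
      rw [← Real.rpow_add Real.pi_pos]; congr 1; rw [hs]; ring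
    have e2 : π ^ β = π ^ (β / 2) * π ^ (β / 2) := by
      rw [← Real.rpow_add Real.pi_pos]; congr 1; ring
    rw [e, e1, Real.mul_rpow (by norm_num) Real.pi_pos.le, Real.rpow_neg Real.pi_pos.le,
      Real.rpow_neg Real.pi_pos.le, Real.rpow_neg Real.pi_pos.le, Real.rpow_neg (by norm_num), e2]
    have := Real.rpow_pos_of_pos Real.pi_pos ((n : ℝ) / 2)
    have := Real.rpow_pos_of_pos Real.pi_pos (β / 2)
    have := Real.rpow_pos_of_pos (show (0 : ℝ) < 2 by norm_num) β
    field_simp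
  set IL := ∫ p : Rn n × Rn n, (g p.2 * H p.1) *
      ((‖p.1 - p.2‖ ^ (-(2 * s)) : ℝ) : ℂ) ∂(volume.prod volume)
  have hRe : ∫ u, (((2 * π) ^ (-β) * ‖T u‖ ^ (-β) : ℝ) : ℂ) * (h u * 𝓕 (g : Rn n → ℂ) (T u))
      = (((2 * π) ^ (-β) : ℝ) : ℂ) * ∫ u, (h u * 𝓕 (g : Rn n → ℂ) (T u)) *
      ((‖T u‖ ^ (-(2 * (β / 2))) : ℝ) : ℂ) := by
    rw [← integral_const_mul]
    congr 1
    ext u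
    have : 2 * (β / 2) = β := by ring
    rw [this]
    push_cast
    ring
  rw [hRe]
  set IR := ∫ u, (h u * 𝓕 (g : Rn n → ℂ) (T u)) * ((‖T u‖ ^ (-(2 * (β / 2))) : ℝ) : ℂ)
  have hne : ((Real.Gamma s * π ^ (-s) : ℝ) : ℂ) ≠ 0 := by
    have : 0 < Real.Gamma s * π ^ (-s) := by positivity
    exact_mod_cast this.ne'
  have hconst' := congrArg (fun r : ℝ => (r : ℂ)) hconst
  rw [Complex.ofReal_mul, Complex.ofReal_mul ((2 * π) ^ (-β))] at hconst'
  apply mul_left_cancel₀ hne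
  linear_combination ((1 / gammaC n β : ℝ) : ℂ) * hL + IR * hconst'
lemma aux_sin_ne {n : ℕ} {α : Rn n} (hα : notPiZ α) (k : Fin n) : Real.sin (α k) ≠ 0 := by
  intro h
  obtain ⟨m, hm⟩ := Real.sin_eq_zero_iff.1 h
  exact hα k m hm.symm

lemma aux_tilde_apply {n : ℕ} (α u : Rn n) (k : Fin n) :
    tilde α u k = u k / Real.sin (α k) := rfl

lemma aux_frft {n : ℕ} (α : Rn n) (f : Rn n → ℂ) (x : Rn n) :
    frft α f x = cConst α * chirp α x *
      ∫ u, Complex.exp (((-2 * π * inner ℝ u (tilde α x) : ℝ) : ℂ) * Complex.I) *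
        (f u * chirp α u) := by
  rw [frft, ← integral_const_mul]
  congr 1
  ext u
  have : frftKernel α u x = cConst α * chirp α x *
      (Complex.exp (((-2 * π * inner ℝ u (tilde α x) : ℝ) : ℂ) * Complex.I) * chirp α u) := by
    rw [frftKernel, Finset.prod_mul_distrib, ← Complex.exp_sum, ← cConst, mul_assoc (cConst α), chirp, chirp,
      ← Complex.exp_add, ← Complex.exp_add]
    congr 2
    rw [PiLp.inner_apply]
    simp only [aux_tilde_apply]
    push_cast
    simp only [Finset.mul_sum, Finset.sum_mul, ← Finset.sum_add_distrib]
    refine Finset.sum_congr rfl fun k _ => ?_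
    simp only [RCLike.inner_apply, conj_trivial]
    push_cast
    ring
  rw [this]
  ring

lemma aux_inner_tilde {n : ℕ} (α u x : Rn n) :
    (inner ℝ u (tilde α x) : ℝ) = inner ℝ x (tilde α u) := by
  rw [PiLp.inner_apply, PiLp.inner_apply]
  refine Finset.sum_congr rfl fun k _ => ?_
  simp only [RCLike.inner_apply, conj_trivial, aux_tilde_apply]
  ring

lemma aux_norm_tilde {n : ℕ} {α : Rn n} (hα : notPiZ α) (u : Rn n) : ‖u‖ ≤ ‖tilde α u‖ := by
  rw [EuclideanSpace.norm_eq, EuclideanSpace.norm_eq]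
  refine Real.sqrt_le_sqrt (Finset.sum_le_sum fun k _ => ?_)
  rw [aux_tilde_apply, norm_div]
  have h1 : 0 < ‖Real.sin (α k)‖ := norm_pos_iff.2 (aux_sin_ne hα k)
  have h2 : ‖Real.sin (α k)‖ ≤ 1 := Real.abs_sin_le_one _
  gcongr
  exact le_div_self (norm_nonneg _) h1 h2

/-- `tilde` as a linear equivalence. -/
def auxTildeEquiv {n : ℕ} {α : Rn n} (hα : notPiZ α) : Rn n ≃L[ℝ] Rn n :=
  LinearEquiv.toContinuousLinearEquiv
    { toFun := tilde α
      invFun := fun u => (EuclideanSpace.equiv (Fin n) ℝ).symm fun k => u k * Real.sin (α k)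
      map_add' := fun x y => by
        ext k; simp only [PiLp.add_apply, aux_tilde_apply]; ring
      map_smul' := fun c y => by
        ext k; simp only [PiLp.smul_apply, aux_tilde_apply, smul_eq_mul, RingHom.id_apply]; ring
      left_inv := fun x => by
        ext k
        change x k / Real.sin (α k) * Real.sin (α k) = x k
        exact div_mul_cancel₀ _ (aux_sin_ne hα k)
      right_inv := fun x => by
        ext k
        change x k * Real.sin (α k) / Real.sin (α k) = x k
        exact mul_div_cancel_right₀ _ (aux_sin_ne hα k) }

lemma auxTildeEquiv_apply {n : ℕ} {α : Rn n} (hα : notPiZ α) (u : Rn n) :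
    auxTildeEquiv hα u = tilde α u := rfl

lemma aux_chirp_neg {n : ℕ} (α x : Rn n) : chirp (-α) x * chirp α x = 1 := by
  rw [chirp, chirp, ← Complex.exp_add, ← Complex.exp_zero]
  congr 1
  have : ∀ a : ℝ, Real.cot (-a) = -Real.cot a := fun a => by
    rw [Real.cot_eq_cos_div_sin, Real.cot_eq_cos_div_sin, Real.cos_neg, Real.sin_neg, div_neg]
  simp only [PiLp.neg_apply, this, neg_div, neg_mul, Finset.sum_neg_distrib]
  push_cast
  ring

/-- `F_α(I_β^α f) = (2π)^{-β}|ũ|^{-β} F_α f` in `𝒮'`. -/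
theorem frft_rieszPotChirp {n : ℕ} (β : ℝ) (hβ : 0 < β) (hβn : β < n)
    (α : Rn n) (hα : notPiZ α) (f : 𝓢(Rn n, ℂ)) (φ : 𝓢(Rn n, ℂ)) :
    ∫ x, rieszPotChirp α β (⇑f) x * frft α (⇑φ) x
      = ∫ u, (((2 * π) ^ (-β) * ‖tilde α u‖ ^ (-β) : ℝ) : ℂ) * frft α (⇑f) u * φ u := by
  obtain ⟨g, hg⟩ := aux_mul_chirp α f
  obtain ⟨h, hh⟩ := aux_mul_chirp α φ
  let H : 𝓢(Rn n, ℂ) :=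
    SchwartzMap.compCLMOfContinuousLinearEquiv ℂ (auxTildeEquiv hα) (𝓕 h)
  have hHt : ∀ x, H x = 𝓕 (h : Rn n → ℂ) (tilde α x) := fun x => by
    rw [← SchwartzMap.fourier_coe]; rfl
  have hH : ∀ x, H x =
      ∫ u, Complex.exp (((-2 * π * inner ℝ x (tilde α u) : ℝ) : ℂ) * Complex.I) * h u := by
    intro x
    rw [hHt, Real.fourier_eq']
    simp only [aux_inner_tilde, smul_eq_mul]
  have hT : Continuous (tilde α) := (auxTildeEquiv hα).continuous
  have core := aux_core β hβ hβn (tilde α) hT (aux_norm_tilde hα) g h H hH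
  have hfr : ∀ (q p : 𝓢(Rn n, ℂ)) (_ : ∀ x, p x = q x * chirp α x) (x : Rn n),
      frft α q x = cConst α * chirp α x * 𝓕 (p : Rn n → ℂ) (tilde α x) := by
    intro q p hp x
    rw [aux_frft, Real.fourier_eq']
    simp only [hp, smul_eq_mul]
  have e1 : ∀ x, rieszPotChirp α β f x * frft α φ x = cConst α * (((1 / gammaC n β : ℝ) : ℂ) *
      ((∫ y, g y / ((‖x - y‖ ^ ((n : ℝ) - β) : ℝ) : ℂ)) * H x)) := by
    intro x
    rw [hfr φ h hh, hHt, rieszPotChirp]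
    simp only [hg]
    linear_combination (cConst α * (((1 / gammaC n β : ℝ) : ℂ) *
      ((∫ y, f y * chirp α y / ((‖x - y‖ ^ ((n : ℝ) - β) : ℝ) : ℂ)) *
        𝓕 (h : Rn n → ℂ) (tilde α x)))) * aux_chirp_neg α x
  have e2 : ∀ u, (((2 * π) ^ (-β) * ‖tilde α u‖ ^ (-β) : ℝ) : ℂ) * frft α f u * φ u
      = cConst α * ((((2 * π) ^ (-β) * ‖tilde α u‖ ^ (-β) : ℝ) : ℂ) *
        (h u * 𝓕 (g : Rn n → ℂ) (tilde α u))) := by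
    intro u
    rw [hfr f g hg, hh]
    ring
  simp only [e1, e2]
  rw [integral_const_mul, integral_const_mul, integral_const_mul, core]
end
end
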